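/- Chernoff/Trotter product formula: Let H be a complex Hilbert space. Let S, T, U : [0,∞) → B(H) be strongly continuous one-parameter contraction semigroups (i.e. each maps 0 to the identity, satisfies S(s+t) = S(s)∘S(t), has operator norm at most 1 for every t, and t ↦ S(t)x is continuous for every x ∈ H). Let A, B, C be their generators, i.e. the unbounded operators (linear partial maps) whose domain consists of exactly those x ∈ H for which the right derivative of t ↦ S(t)x (resp. T(t)x, U(t)x) at t = 0 exists, the operator value being that derivative. Assume that the algebraic sum A + B (defined on the intersection of the domains of A and B) is closable and that its closure equals C. Then for every x ∈ H and every t ≥ 0, (S(t/n)∘T(t/n))ⁿ x converges to U(t)x in H as n → ∞. -/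

import Mathlib

open Filter Topology

/-- A strongly continuous one-parameter contraction semigroup on `[0,∞)`. -/
def IsContractionSemigroup {H : Type*} [NormedAddCommGroup H] [InnerProductSpace ℂ H]
    (S : ℝ → H →L[ℂ] H) : Prop :=
  S 0 = ContinuousLinearMap.id ℂ H ∧
  (∀ s t : ℝ, 0 ≤ s → 0 ≤ t → S (s + t) = (S s).comp (S t)) ∧
  (∀ t : ℝ, 0 ≤ t → ‖S t‖ ≤ 1) ∧
  (∀ x : H, ContinuousOn (fun t : ℝ => S t x) (Set.Ici 0))

/-- `A` is the generator of the semigroup `S`: its domain consists exactly of those `x`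
for which the right derivative of `t ↦ S t x` at `t = 0` exists, and `A x` is that
derivative. -/
def IsGeneratorOf {H : Type*} [NormedAddCommGroup H] [InnerProductSpace ℂ H]
    (A : H →ₗ.[ℂ] H) (S : ℝ → H →L[ℂ] H) : Prop :=
  (∀ x : H, x ∈ A.domain ↔
      ∃ y : H, Tendsto (fun t : ℝ => t⁻¹ • (S t x - x)) (𝓝[>] 0) (𝓝 y)) ∧
  (∀ x : A.domain,
      Tendsto (fun t : ℝ => t⁻¹ • (S t (x : H) - (x : H))) (𝓝[>] 0) (𝓝 (A x)))

lemma ct_seg {H : Type*} [NormedAddCommGroup H] [InnerProductSpace ℂ H]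
    (L : H →L[ℂ] H) (hL : ‖L‖ ≤ 1) (h Δ η : ℝ) (hh : 0 < h) (hΔ : 0 < Δ)
    (y0 y1 w : H) (hw : y1 = y0 + Δ • w)
    (h0 : ‖h⁻¹ • (L y0 - y0) - w‖ ≤ η) (h1 : ‖h⁻¹ • (L y1 - y1) - w‖ ≤ η) (k : ℕ)
    (hk : k * h ≤ Δ) : ‖(L ^ k) y0 - (y0 + (k * h) • w)‖ ≤ k * h * η := by
  induction k with
  | zero => simp
  | succ k ih =>
    rw [Nat.cast_succ] at hk ⊢
    have hk' : k * h ≤ Δ := by nlinarith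
    have ih := ih hk'
    set s : ℝ := k * h with hs
    have hs0 : 0 ≤ s := by positivity
    set θ : ℝ := s / Δ with hθ
    have hθ0 : 0 ≤ θ := by positivity
    have hθ1 : θ ≤ 1 := by rw [hθ, div_le_one hΔ]; exact hk'
    have hsθ : s = θ * Δ := by rw [hθ]; field_simp
    set a0 := h⁻¹ • (L y0 - y0) with ha0
    set a1 := h⁻¹ • (L y1 - y1) with ha1
    have e0 : L y0 = y0 + h • a0 := by rw [ha0, smul_inv_smul₀ hh.ne']; abel
    have e1 : L y1 = y1 + h • a1 := by rw [ha1, smul_inv_smul₀ hh.ne']; abel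
    have ew : y0 + s • w = (1 - θ) • y0 + θ • y1 := by rw [hw, hsθ]; module
    have eL : L (y0 + s • w) = (1 - θ) • L y0 + θ • L y1 := by
      rw [ew, map_add, L.map_smul_of_tower, L.map_smul_of_tower]
    have e2 : (L ^ (k + 1)) y0 - (y0 + ((k + 1) * h) • w)
        = L ((L ^ k) y0 - (y0 + s • w)) + h • ((1 - θ) • (a0 - w) + θ • (a1 - w)) := by
      have : ((k : ℝ) + 1) * h = s + h := by rw [hs]; ring
      rw [pow_succ', ContinuousLinearMap.mul_apply, map_sub, eL, e0, e1, this, hw, hsθ]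
      module
    rw [e2]
    have b1 : ‖L ((L ^ k) y0 - (y0 + s • w))‖ ≤ s * η :=
      (L.le_of_opNorm_le hL _).trans (by rw [one_mul]; exact ih)
    have b2 : ‖h • ((1 - θ) • (a0 - w) + θ • (a1 - w))‖ ≤ h * η := by
      rw [norm_smul, Real.norm_of_nonneg hh.le]
      gcongr
      calc _ ≤ ‖(1 - θ) • (a0 - w)‖ + ‖θ • (a1 - w)‖ := norm_add_le _ _
        _ = (1 - θ) * ‖a0 - w‖ + θ * ‖a1 - w‖ := by
          rw [norm_smul, norm_smul, Real.norm_of_nonneg hθ0, Real.norm_of_nonneg (by linarith)]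
        _ ≤ (1 - θ) * η + θ * η := by
          have : 0 ≤ 1 - θ := by linarith
          gcongr
        _ = η := by ring
    calc _ ≤ _ := norm_add_le _ _
      _ ≤ s * η + h * η := add_le_add b1 b2
      _ = _ := by rw [hs]; ring

lemma ct_pow_le {H : Type*} [NormedAddCommGroup H] [InnerProductSpace ℂ H]
    (L : H →L[ℂ] H) (hL : ‖L‖ ≤ 1) (k : ℕ) (x : H) : ‖(L ^ k) x‖ ≤ ‖x‖ := by
  induction k with
  | zero => simp
  | succ k ih =>
    rw [pow_succ', ContinuousLinearMap.mul_apply]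
    exact (L.le_of_opNorm_le hL _).trans (by rw [one_mul]; exact ih)

lemma ct_chain {H : Type*} [NormedAddCommGroup H] [InnerProductSpace ℂ H]
    (L : H →L[ℂ] H) (hL : ‖L‖ ≤ 1) (k m : ℕ) (c : ℝ) (y : ℕ → H)
    (hy : ∀ j < m, ‖(L ^ k) (y j) - y (j + 1)‖ ≤ c) :
    ‖(L ^ (k * m)) (y 0) - y m‖ ≤ m * c := by
  induction m with
  | zero => simp
  | succ m ih =>
    have ih := ih (fun j hj => hy j (by omega))
    have e : (L ^ (k * (m + 1))) (y 0) - y (m + 1)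
        = (L ^ k) ((L ^ (k * m)) (y 0) - y m) + ((L ^ k) (y m) - y (m + 1)) := by
      rw [mul_add, mul_one, add_comm, pow_add, ContinuousLinearMap.mul_apply, map_sub]
      abel
    rw [e]
    calc _ ≤ _ := norm_add_le _ _
      _ ≤ m * c + c := add_le_add ((ct_pow_le L hL k _).trans ih) (hy m (by omega))
      _ = _ := by push_cast; ring

/-- Convergence on the domain of the limiting generator. -/
lemma ct_core {H : Type*} [NormedAddCommGroup H] [InnerProductSpace ℂ H]
    (F U : ℝ → H →L[ℂ] H) (hF : ∀ h, 0 < h → ‖F h‖ ≤ 1)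
    (hU : IsContractionSemigroup U) (G : Set (H × H))
    (hG : ∀ p ∈ G, Tendsto (fun t : ℝ => t⁻¹ • (F t p.1 - p.1)) (𝓝[>] 0) (𝓝 p.2))
    (x z : H) (hx : Tendsto (fun t : ℝ => t⁻¹ • (U t x - x)) (𝓝[>] 0) (𝓝 z))
    (happ : ∀ s, 0 ≤ s → (U s x, U s z) ∈ closure G) (t : ℝ) (ht : 0 < t) :
    Tendsto (fun n : ℕ => ((F (t / n)) ^ n) x) atTop (𝓝 (U t x)) := by
  obtain ⟨U0, Uadd, Unorm, Ucont⟩ := hU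
  have Uc : ∀ s, 0 ≤ s → ∀ v, ‖U s v‖ ≤ ‖v‖ := fun s hs v =>
    ((U s).le_of_opNorm_le (Unorm s hs) v).trans (by rw [one_mul])
  have hlim : Tendsto (fun n : ℕ => t / n) atTop (𝓝[>] 0) := by
    rw [tendsto_nhdsWithin_iff]
    refine ⟨tendsto_const_div_atTop_nhds_zero_nat t, ?_⟩
    filter_upwards [eventually_gt_atTop 0] with n hn
    simp only [Set.mem_Ioi]; positivity
  suffices hmain : ∀ ε > 0, ∀ᶠ n : ℕ in atTop,
      ‖((F (t / n)) ^ n) x - U t x‖ ≤ (7 * t + 3) * ε by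
    rw [Metric.tendsto_nhds]
    intro e he
    have hp : 0 < 7 * t + 3 := by positivity
    filter_upwards [hmain (e / 2 / (7 * t + 3)) (by positivity)] with n hn
    rw [dist_eq_norm]
    have : (7 * t + 3) * (e / 2 / (7 * t + 3)) = e / 2 := by field_simp
    linarith
  intro ε hε
  -- choose the macro step
  have c1 : ∀ᶠ d in 𝓝[>] (0 : ℝ), ‖d⁻¹ • (U d x - x) - z‖ < ε := by
    simpa [dist_eq_norm] using Metric.tendsto_nhds.1 hx ε hε
  have c2 : ∀ᶠ d in 𝓝[>] (0 : ℝ), ‖U d z - z‖ < ε := by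
    have : Tendsto (fun d => U d z) (𝓝[>] 0) (𝓝 z) := by
      have := (Ucont z 0 (by simp)).mono_left (nhdsWithin_mono 0 Set.Ioi_subset_Ici_self)
      simpa [U0] using this
    simpa [dist_eq_norm] using Metric.tendsto_nhds.1 this ε hε
  obtain ⟨m, ⟨hm1, hm2⟩, hm0⟩ :=
    ((hlim.eventually (c1.and c2)).and (eventually_gt_atTop 0)).exists
  have hm0' : (0 : ℝ) < m := by exact_mod_cast hm0
  set Δ : ℝ := t / m with hΔdef
  have hΔ : 0 < Δ := by positivity
  have hmΔ : m * Δ = t := by rw [hΔdef]; field_simp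
  have happ' : ∀ j : ℕ, ∃ p ∈ G, ‖p.1 - U (j * Δ) x‖ ≤ ε ∧ ‖p.1 - U (j * Δ) x‖ ≤ ε * Δ ∧
      ‖p.2 - U (j * Δ) z‖ ≤ ε := by
    intro j
    obtain ⟨p, hp, hd⟩ := Metric.mem_closure_iff.1 (happ (j * Δ) (by positivity))
      (min ε (ε * Δ)) (by positivity)
    rw [dist_comm, Prod.dist_eq, max_lt_iff, dist_eq_norm, dist_eq_norm] at hd
    exact ⟨p, hp, hd.1.le.trans (min_le_left _ _), hd.1.le.trans (min_le_right _ _),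
      hd.2.le.trans (min_le_left _ _)⟩
  choose p hpG hp1 hp2 hp3 using happ'
  set y : ℕ → H := fun j => (p j).1 with hy
  set w : ℕ → H := fun j => Δ⁻¹ • (y (j + 1) - y j) with hw
  have hyw : ∀ j, y (j + 1) = y j + Δ • w j := by
    intro j
    simp only [hw]
    rw [smul_inv_smul₀ hΔ.ne']; abel
  have Us : ∀ j : ℕ, ∀ v, U ((j + 1 : ℕ) * Δ) v = U (j * Δ) (U Δ v) := by
    intro j v
    rw [← ContinuousLinearMap.comp_apply, ← Uadd _ _ (by positivity) hΔ.le]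
    push_cast; ring_nf
  -- slope estimate
  have hslope : ∀ j : ℕ, ‖w j - U (j * Δ) z‖ ≤ 3 * ε := by
    intro j
    have e : w j - U (j * Δ) z = Δ⁻¹ • (y (j + 1) - U ((j + 1 : ℕ) * Δ) x)
        - Δ⁻¹ • (y j - U (j * Δ) x) + U (j * Δ) (Δ⁻¹ • (U Δ x - x) - z) := by
      rw [map_sub, ContinuousLinearMap.map_smul_of_tower, map_sub, ← Us]
      simp only [hw]
      module
    have b : ∀ i : ℕ, ‖Δ⁻¹ • (y i - U (i * Δ) x)‖ ≤ ε := by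
      intro i
      rw [norm_smul, Real.norm_of_nonneg (by positivity)]
      calc _ ≤ Δ⁻¹ * (ε * Δ) := by gcongr; exact hp2 i
        _ = ε := by field_simp
    rw [e]
    have b3 := (Uc (j * Δ) (by positivity) (Δ⁻¹ • (U Δ x - x) - z)).trans hm1.le
    have := norm_add_le (Δ⁻¹ • (y (j + 1) - U ((j + 1 : ℕ) * Δ) x)
        - Δ⁻¹ • (y j - U (j * Δ) x)) (U (j * Δ) (Δ⁻¹ • (U Δ x - x) - z))
    have h2 := norm_sub_le (Δ⁻¹ • (y (j + 1) - U ((j + 1 : ℕ) * Δ) x))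
        (Δ⁻¹ • (y j - U (j * Δ) x))
    linarith [b j, b (j + 1)]
  have hz0 : ∀ j : ℕ, ‖(p j).2 - w j‖ ≤ 5 * ε := by
    intro j
    have := norm_sub_le_norm_sub_add_norm_sub (p j).2 (U (j * Δ) z) (w j)
    rw [norm_sub_rev (U (j * Δ) z)] at this
    linarith [hp3 j, hslope j]
  have hz1 : ∀ j : ℕ, ‖(p (j + 1)).2 - w j‖ ≤ 5 * ε := by
    intro j
    have h1 := norm_sub_le_norm_sub_add_norm_sub (p (j + 1)).2 (U (j * Δ) z) (w j)
    have h2 := norm_sub_le_norm_sub_add_norm_sub (p (j + 1)).2 (U ((j + 1 : ℕ) * Δ) z)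
      (U (j * Δ) z)
    have h3 : ‖U ((j + 1 : ℕ) * Δ) z - U (j * Δ) z‖ ≤ ε := by
      rw [Us, ← map_sub]
      exact (Uc _ (by positivity) _).trans hm2.le
    rw [norm_sub_rev (U (j * Δ) z)] at h1
    linarith [hp3 (j + 1), hslope j]
  -- eventual conditions
  have ev1 : ∀ᶠ n : ℕ in atTop, ∀ j ∈ Finset.range (m + 1),
      ‖(t / n)⁻¹ • (F (t / n) (y j) - y j) - (p j).2‖ < ε := by
    rw [Filter.eventually_all_finset]
    intro j _
    have := (hG _ (hpG j)).comp hlim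
    simpa [dist_eq_norm] using Metric.tendsto_nhds.1 this ε hε
  have hlim0 : Tendsto (fun n : ℕ => t / n) atTop (𝓝 0) :=
    tendsto_const_div_atTop_nhds_zero_nat t
  have ev2 : ∀ᶠ n : ℕ in atTop, ∀ j ∈ Finset.range (m + 1), (t / n) * ‖w j‖ < ε * Δ := by
    rw [Filter.eventually_all_finset]
    intro j _
    have := hlim0.mul_const ‖w j‖
    rw [zero_mul] at this
    exact this.eventually (gt_mem_nhds (by positivity))
  have ev3 : ∀ᶠ n : ℕ in atTop, (t / n) * (m * (‖(p m).2‖ + ε)) < ε := by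
    have := hlim0.mul_const (m * (‖(p m).2‖ + ε))
    rw [zero_mul] at this
    exact this.eventually (gt_mem_nhds hε)
  filter_upwards [ev1, ev2, ev3, eventually_gt_atTop 0] with n h1 h2 h3 hn
  have hn' : (0 : ℝ) < n := by exact_mod_cast hn
  set h : ℝ := t / n with hh
  have hpos : 0 < h := by positivity
  have hnh : n * h = t := by rw [hh]; field_simp
  set L := F h with hLdef
  have hL : ‖L‖ ≤ 1 := hF h hpos
  set k := n / m with hk
  set r := n % m with hr
  have hkr : r + k * m = n := by rw [hk, hr, mul_comm]; exact Nat.mod_add_div n m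
  have hrm : r < m := Nat.mod_lt _ hm0
  have hkr' : (r : ℝ) + k * m = n := by exact_mod_cast hkr
  have hrm' : (r : ℝ) ≤ m := by exact_mod_cast hrm.le
  have hkh : k * h ≤ Δ := by
    rw [hΔdef, le_div_iff₀ hm0', ← hnh, ← hkr']
    nlinarith [mul_nonneg (Nat.cast_nonneg r : (0 : ℝ) ≤ r) hpos.le]
  have hkh2 : Δ - k * h ≤ h := by
    rw [sub_le_iff_le_add, hΔdef, div_le_iff₀ hm0', ← hnh, ← hkr']
    nlinarith [mul_le_mul_of_nonneg_right hrm' hpos.le]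
  have hseg : ∀ j < m, ‖(L ^ k) (y j) - y (j + 1)‖ ≤ 7 * ε * Δ := by
    intro j hj
    have g0 : ‖h⁻¹ • (L (y j) - y j) - w j‖ ≤ 6 * ε := by
      have := norm_sub_le_norm_sub_add_norm_sub (h⁻¹ • (L (y j) - y j)) (p j).2 (w j)
      linarith [h1 j (by simp; omega), hz0 j]
    have g1 : ‖h⁻¹ • (L (y (j + 1)) - y (j + 1)) - w j‖ ≤ 6 * ε := by
      have := norm_sub_le_norm_sub_add_norm_sub (h⁻¹ • (L (y (j + 1)) - y (j + 1)))
        (p (j + 1)).2 (w j)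
      linarith [h1 (j + 1) (by simp; omega), hz1 j]
    have g := ct_seg L hL h Δ (6 * ε) hpos hΔ _ _ _ (hyw j) g0 g1 k hkh
    have e : (L ^ k) (y j) - y (j + 1)
        = ((L ^ k) (y j) - (y j + (k * h) • w j)) - (Δ - k * h) • w j := by
      rw [hyw]; module
    rw [e]
    have g2 : ‖(Δ - k * h) • w j‖ ≤ ε * Δ := by
      rw [norm_smul, Real.norm_of_nonneg (by linarith)]
      exact (mul_le_mul_of_nonneg_right hkh2 (norm_nonneg _)).trans (h2 j (by simp; omega)).le
    have g3 := norm_sub_le ((L ^ k) (y j) - (y j + (k * h) • w j)) ((Δ - k * h) • w j)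
    have g4 : k * h * (6 * ε) ≤ Δ * (6 * ε) := by gcongr
    linarith
  have hch := ct_chain L hL k m _ y hseg
  have hrem : ‖(L ^ r) (y m) - y m‖ ≤ ε := by
    have g : ‖L (y m) - y m‖ ≤ h * (‖(p m).2‖ + ε) := by
      have e : L (y m) - y m = h • (h⁻¹ • (L (y m) - y m)) := by rw [smul_inv_smul₀ hpos.ne']
      rw [e, norm_smul, Real.norm_of_nonneg hpos.le]
      gcongr
      have := norm_sub_norm_le (h⁻¹ • (L (y m) - y m)) (p m).2
      linarith [h1 m (by simp)]
    have := ct_chain L hL 1 r _ (fun _ => y m) (fun j _ => by simpa using g)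
    simp only [one_mul] at this
    refine this.trans ?_
    calc (r : ℝ) * (h * (‖(p m).2‖ + ε)) ≤ m * (h * (‖(p m).2‖ + ε)) := by gcongr
      _ = h * (m * (‖(p m).2‖ + ε)) := by ring
      _ ≤ ε := h3.le
  have e : (L ^ n) x - U t x = (L ^ n) (x - y 0) + (L ^ r) ((L ^ (k * m)) (y 0) - y m)
      + ((L ^ r) (y m) - y m) + (y m - U t x) := by
    rw [← hkr, map_sub, map_sub, ← ContinuousLinearMap.mul_apply (L ^ r), ← pow_add]
    abel
  rw [e]
  have q1 : ‖(L ^ n) (x - y 0)‖ ≤ ε := by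
    refine (ct_pow_le L hL _ _).trans ?_
    rw [norm_sub_rev]
    simpa [U0] using hp1 0
  have q2 : ‖(L ^ r) ((L ^ (k * m)) (y 0) - y m)‖ ≤ 7 * ε * t := by
    refine (ct_pow_le L hL _ _).trans (hch.trans (le_of_eq ?_))
    rw [← hmΔ]; ring
  have q4 : ‖y m - U t x‖ ≤ ε := by
    have := hp1 m
    rwa [hmΔ] at this
  refine (norm_add_le _ _).trans ?_
  refine (add_le_add_left (norm_add_le _ _) _).trans ?_
  refine (add_le_add_left (add_le_add_left (norm_add_le _ _) _) _).trans ?_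
  linarith

lemma ct_tendsto_zero {H : Type*} [NormedAddCommGroup H] [InnerProductSpace ℂ H]
    {S : ℝ → H →L[ℂ] H} (hS : IsContractionSemigroup S) (x : H) :
    Tendsto (fun d => S d x) (𝓝[>] 0) (𝓝 x) := by
  have := (hS.2.2.2 x 0 (by simp)).mono_left (nhdsWithin_mono 0 Set.Ioi_subset_Ici_self)
  simpa [hS.1] using this

/-- The domain of the generator is dense. -/
lemma ct_dense {H : Type*} [NormedAddCommGroup H] [InnerProductSpace ℂ H] [CompleteSpace H]
    {U : ℝ → H →L[ℂ] H} (hU : IsContractionSemigroup U) (x : H) (ε : ℝ) (hε : 0 < ε) :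
    ∃ y, ‖x - y‖ < ε ∧ ∃ z, Tendsto (fun t : ℝ => t⁻¹ • (U t y - y)) (𝓝[>] 0) (𝓝 z) := by
  set v : ℝ → H := fun s => U (max s 0) x with hv
  have hvc : Continuous v := by
    have := (hU.2.2.2 x).comp_continuous (f := fun s : ℝ => max s 0) (by fun_prop)
      (fun s => by simp)
    exact this
  have hder : ∀ a : ℝ, Tendsto (fun h : ℝ => h⁻¹ • ∫ s in a..(a + h), v s) (𝓝[>] 0)
      (𝓝 (v a)) := by
    intro a
    have h1 : HasDerivAt (fun b => ∫ s in a..b, v s) (v a) a :=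
      intervalIntegral.integral_hasDerivAt_right (hvc.intervalIntegrable _ _)
        hvc.stronglyMeasurable.stronglyMeasurableAtFilter hvc.continuousAt
    have h2 := h1.tendsto_slope_zero_right
    simpa using h2
  have hv0 : v 0 = x := by simp [hv, hU.1]
  have h0 := hder 0
  simp only [zero_add, hv0] at h0
  obtain ⟨a, ha, hapos⟩ := ((Metric.tendsto_nhds.1 h0 ε hε).and
    (eventually_mem_nhdsWithin)).exists
  have hapos : 0 < a := hapos
  refine ⟨a⁻¹ • ∫ s in (0 : ℝ)..a, v s, by rwa [dist_comm, dist_eq_norm] at ha,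
    a⁻¹ • (v a - x), ?_⟩
  have hl := ((hder a).sub h0).const_smul a⁻¹
  refine hl.congr' ?_
  filter_upwards [self_mem_nhdsWithin] with h hh
  have hh : 0 < h := hh
  have e1 : U h (∫ s in (0 : ℝ)..a, v s) = ∫ s in (0 : ℝ)..a, v (s + h) := by
    rw [← ContinuousLinearMap.intervalIntegral_comp_comm _ (hvc.intervalIntegrable _ _)]
    apply intervalIntegral.integral_congr
    intro s hs
    rw [Set.uIcc_of_le hapos.le] at hs
    simp only [hv]
    rw [max_eq_left hs.1, max_eq_left (by linarith [hs.1]), add_comm s h,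
      hU.2.1 h s hh.le hs.1]
    rfl
  have e2 : ∫ s in (0 : ℝ)..a, v (s + h) = ∫ s in h..(a + h), v s := by
    rw [intervalIntegral.integral_comp_add_right, zero_add]
  have i : ∀ b c : ℝ, IntervalIntegrable v MeasureTheory.volume b c :=
    fun b c => hvc.intervalIntegrable _ _
  have e3 : (∫ s in h..(a + h), v s) - ∫ s in (0 : ℝ)..a, v s
      = (∫ s in a..(a + h), v s) - ∫ s in (0 : ℝ)..h, v s := by
    rw [← intervalIntegral.integral_add_adjacent_intervals (i 0 h) (i h a),
      ← intervalIntegral.integral_add_adjacent_intervals (i h a) (i a (a + h))]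
    abel
  rw [ContinuousLinearMap.map_smul_of_tower, e1, e2, ← smul_sub, ← smul_sub, e3, smul_comm]

/-- **Chernoff/Trotter product formula.**  Let `S`, `T`, `U` be strongly continuous
one-parameter contraction semigroups on a complex Hilbert space `H`, with generators
`A`, `B`, `C`.  If the algebraic sum `A + B` (defined on `dom A ⊓ dom B`) is closable
with closure `C`, then for every `x ∈ H` and `t ≥ 0`,
`(S(t/n) ∘ T(t/n))ⁿ x → U(t) x` as `n → ∞`. -/
theorem chernoff_trotter_product_formula
    {H : Type*} [NormedAddCommGroup H] [InnerProductSpace ℂ H] [CompleteSpace H]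
    (S T U : ℝ → H →L[ℂ] H)
    (hS : IsContractionSemigroup S) (hT : IsContractionSemigroup T)
    (hU : IsContractionSemigroup U)
    (A B C : H →ₗ.[ℂ] H)
    (hA : IsGeneratorOf A S) (hB : IsGeneratorOf B T) (hC : IsGeneratorOf C U)
    (hclosable : (A + B).IsClosable)
    (hclosure : (A + B).closure = C) :
    ∀ (x : H) (t : ℝ), 0 ≤ t →
      Tendsto (fun n : ℕ => (((S (t / n)).comp (T (t / n))) ^ n) x)
        atTop (𝓝 (U t x)) := by
  have Sc : ∀ s, 0 ≤ s → ∀ v, ‖S s v‖ ≤ ‖v‖ := fun s hs v =>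
    ((S s).le_of_opNorm_le (hS.2.2.1 s hs) v).trans (by rw [one_mul])
  have hF : ∀ h, 0 ≤ h → ‖(S h).comp (T h)‖ ≤ 1 := by
    intro h hh
    refine ((S h).opNorm_comp_le (T h)).trans ?_
    exact mul_le_one₀ (hS.2.2.1 h hh) (norm_nonneg _) (hT.2.2.1 h hh)
  intro x t ht
  rcases ht.eq_or_lt with rfl | htpos
  · have e : (S 0).comp (T 0) = 1 := by rw [hS.1, hT.1]; rfl
    simp [e, hU.1]
  have hG : ∀ p ∈ ((A + B).graph : Set (H × H)),
      Tendsto (fun t : ℝ => t⁻¹ • ((S t).comp (T t) p.1 - p.1)) (𝓝[>] 0) (𝓝 p.2) := by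
    intro p hp
    obtain ⟨y, hy1, hy2⟩ := (LinearPMap.mem_graph_iff _).1 hp
    have hyd : (y : H) ∈ A.domain ⊓ B.domain := y.2
    have tA := hA.2 ⟨y, hyd.1⟩
    have tB := hB.2 ⟨y, hyd.2⟩
    rw [LinearPMap.add_apply] at hy2
    rw [← hy1, ← hy2]
    set b := B ⟨y, hyd.2⟩ with hb
    have tS : Tendsto (fun t : ℝ => S t (t⁻¹ • (T t (y : H) - y) - b)) (𝓝[>] 0) (𝓝 0) := by
      refine squeeze_zero_norm' ?_ (tendsto_iff_norm_sub_tendsto_zero.1 tB)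
      filter_upwards [self_mem_nhdsWithin] with s hs
      exact Sc s (le_of_lt hs) _
    have tot := (tA.add (tS.add (ct_tendsto_zero hS b)))
    rw [zero_add] at tot
    refine tot.congr ?_
    intro s
    simp only [map_sub, ContinuousLinearMap.map_smul_of_tower, ContinuousLinearMap.comp_apply]
    module
  have hcore : ∀ y z, Tendsto (fun t : ℝ => t⁻¹ • (U t y - y)) (𝓝[>] 0) (𝓝 z) →
      Tendsto (fun n : ℕ => (((S (t / n)).comp (T (t / n))) ^ n) y) atTop (𝓝 (U t y)) := by
    intro y z hyz
    refine ct_core (fun h => (S h).comp (T h)) U (fun h hh => hF h hh.le) hU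
      ((A + B).graph : Set (H × H)) hG y z hyz ?_ t htpos
    intro s hs
    have hlim : Tendsto (fun t : ℝ => t⁻¹ • (U t (U s y) - U s y)) (𝓝[>] 0) (𝓝 (U s z)) := by
      refine (((U s).continuous.tendsto z).comp hyz).congr' ?_
      filter_upwards [self_mem_nhdsWithin] with r hr
      have hr : 0 < r := hr
      have : U r (U s y) = U s (U r y) := by
        rw [← ContinuousLinearMap.comp_apply, ← ContinuousLinearMap.comp_apply,
          ← hU.2.1 _ _ hr.le hs, ← hU.2.1 _ _ hs hr.le, add_comm]
      simp only [Function.comp_apply, map_sub, ContinuousLinearMap.map_smul_of_tower, this]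
    have hd : U s y ∈ C.domain := (hC.1 _).2 ⟨_, hlim⟩
    have hval : C ⟨_, hd⟩ = U s z := tendsto_nhds_unique (hC.2 ⟨_, hd⟩) hlim
    have hmem : (U s y, U s z) ∈ C.graph := by
      rw [← hval]; exact C.mem_graph ⟨_, hd⟩
    rw [← hclosure, ← hclosable.graph_closure_eq_closure_graph] at hmem
    exact hmem
  rw [Metric.tendsto_nhds]
  intro ε hε
  obtain ⟨y, hxy, z, hyz⟩ := ct_dense hU x (ε / 3) (by positivity)
  filter_upwards [Metric.tendsto_nhds.1 (hcore y z hyz) (ε / 3) (by positivity)] with n hn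
  rw [dist_eq_norm] at hn ⊢
  set L := (S (t / n)).comp (T (t / n)) with hL
  have e : (L ^ n) x - U t x = (L ^ n) (x - y) + ((L ^ n) y - U t y) - U t (x - y) := by
    rw [map_sub, map_sub]; abel
  have b1 := ct_pow_le L (hF _ (by positivity)) n (x - y)
  have b2 := ((U t).le_of_opNorm_le (hU.2.2.1 t ht) (x - y))
  rw [e]
  have b3 := norm_sub_le ((L ^ n) (x - y) + ((L ^ n) y - U t y)) (U t (x - y))
  have b4 := norm_add_le ((L ^ n) (x - y)) ((L ^ n) y - U t y)
  linarith
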